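/- arXiv:2110.12699 — 2 statements merged into one kernel-verified Lean document; each statement's English description precedes it below -/
import Mathlib

section
/- The formula φ'_synch expresses synchronicity without Boolean disjunction: let o ∈ AP and φ'_synch := o ∧ G((o ∧ X¬o) ∨ (¬o ∧ Xo)). For every team T = (t_i)_{i∈ι} and every initial tef τ for ι: (T,τ) ⊨ φ'_synch if and only if τ(n)(i) = n for all n ∈ ℕ and i ∈ ι, and for all i ∈ ι and n ∈ ℕ: o ∈ t_i(n) ↔ n is even. -/
namespace TTS

abbrev Trace (AP : Type) := ℕ → Set AP

def IsStutTef {ι : Type} (τ : ℕ → ι → ℕ) : Prop :=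
  ∀ n i, τ n i ≤ τ (n + 1) i

def IsTef {ι : Type} (τ : ℕ → ι → ℕ) : Prop :=
  IsStutTef τ ∧ (∀ n, τ n ≠ τ (n + 1)) ∧ (∀ n i, τ (n + 1) i ≤ τ n i + 1)

def Initial {ι : Type} (τ : ℕ → ι → ℕ) : Prop := ∀ i, τ 0 i = 0

def shift {ι : Type} (τ : ℕ → ι → ℕ) (k : ℕ) : ℕ → ι → ℕ := fun n => τ (n + k)

inductive Formula (AP : Type) : Type
  | atom : AP → Formula AP
  | natom : AP → Formula AP
  | and : Formula AP → Formula AP → Formula AP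
  | or : Formula AP → Formula AP → Formula AP
  | X : Formula AP → Formula AP
  | U : Formula AP → Formula AP → Formula AP
  | W : Formula AP → Formula AP → Formula AP

def sat {AP : Type} : {ι : Type} → (ι → Trace AP) → (ℕ → ι → ℕ) → Formula AP → Prop
  | _, T, τ, .atom p => ∀ i, p ∈ T i (τ 0 i)
  | _, T, τ, .natom p => ∀ i, p ∉ T i (τ 0 i)
  | _, T, τ, .and φ ψ => sat T τ φ ∧ sat T τ ψ
  | ι, T, τ, .or φ ψ =>
      ∃ P : ι → Prop,
        sat (fun i : {i // P i} => T i.1) (fun n i => τ n i.1) φ ∧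
        sat (fun i : {i // ¬ P i} => T i.1) (fun n i => τ n i.1) ψ
  | _, T, τ, .X φ => sat T (shift τ 1) φ
  | _, T, τ, .U φ ψ =>
      ∃ k, sat T (shift τ k) ψ ∧ ∀ m, m < k → sat T (shift τ m) φ
  | _, T, τ, .W φ ψ =>
      ∀ k, sat T (shift τ k) φ ∨ ∃ m, m ≤ k ∧ sat T (shift τ m) ψ

def satE {AP ι : Type} (T : ι → Trace AP) (φ : Formula AP) : Prop :=
  ∃ τ : ℕ → ι → ℕ, IsTef τ ∧ Initial τ ∧ sat T τ φ

def satA {AP ι : Type} (T : ι → Trace AP) (φ : Formula AP) : Prop :=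
  ∀ τ : ℕ → ι → ℕ, IsTef τ → Initial τ → sat T τ φ

def satS {AP ι : Type} (T : ι → Trace AP) (φ : Formula AP) : Prop :=
  sat T (fun n _ => n) φ

def tshift {AP : Type} (t : Trace AP) (k : ℕ) : Trace AP := fun n => t (n + k)

def ltlSat {AP : Type} : Trace AP → Formula AP → Prop
  | t, .atom p => p ∈ t 0
  | t, .natom p => p ∉ t 0
  | t, .and φ ψ => ltlSat t φ ∧ ltlSat t ψ
  | t, .or φ ψ => ltlSat t φ ∨ ltlSat t ψ
  | t, .X φ => ltlSat (tshift t 1) φ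
  | t, .U φ ψ => ∃ k, ltlSat (tshift t k) ψ ∧ ∀ m, m < k → ltlSat (tshift t m) φ
  | t, .W φ ψ => ∀ k, ltlSat (tshift t k) φ ∨ ∃ m, m ≤ k ∧ ltlSat (tshift t m) ψ
/-- φ'_synch := o ∧ G((o ∧ X¬o) ∨ (¬o ∧ Xo)), where Gφ := φ W ⊥ and ⊥ := o ∧ ¬o. -/
def phiSynch' {AP : Type} (o : AP) : Formula AP :=
  .and (.atom o)
    (.W (.or (.and (.atom o) (.X (.natom o)))
             (.and (.natom o) (.X (.atom o))))
        (.and (.atom o) (.natom o)))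

/-- φ'_synch expresses synchronicity without Boolean disjunction. -/
theorem phiSynch'_expresses_synchronicity (AP ι : Type) (o : AP)
    (T : ι → Trace AP) (τ : ℕ → ι → ℕ) (hτ : IsTef τ) (hinit : Initial τ) :
    sat T τ (phiSynch' o) ↔
      ((∀ n (i : ι), τ n i = n) ∧ ∀ (i : ι) n, o ∈ T i n ↔ Even n) := by
  simp only [phiSynch', sat, shift]
  constructor
  · rintro ⟨h0, h⟩
    have key : ∀ k i, (o ∈ T i (τ k i) ↔ o ∉ T i (τ (k + 1) i)) := by
      intro k i
      rcases h k with ⟨P, ⟨h1, h2⟩, h3, h4⟩ | ⟨m, _, h1, h2⟩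
      · have e : 0 + 1 + k = k + 1 := by omega
        by_cases hP : P i
        · have a := h1 ⟨i, hP⟩
          have b := h2 ⟨i, hP⟩
          simp only [e, Nat.zero_add] at a b
          tauto
        · have a := h3 ⟨i, hP⟩
          have b := h4 ⟨i, hP⟩
          simp only [e, Nat.zero_add] at a b
          tauto
      · exact absurd (h1 i) (h2 i)
    have hn : ∀ n (i : ι), τ n i = n := by
      intro n i
      induction n with
      | zero => exact hinit i
      | succ n ih =>
        have h1 := hτ.1 n i
        have h2 := hτ.2.2 n i
        have h3 : τ (n + 1) i ≠ τ n i := by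
          intro e
          have := key n i
          rw [e] at this
          tauto
        omega
    refine ⟨hn, fun i n => ?_⟩
    induction n with
    | zero =>
      have := h0 i
      rw [hn] at this
      simpa using this
    | succ n ih =>
      have := key n i
      rw [hn, hn] at this
      rw [Nat.even_add_one]
      tauto
  · rintro ⟨hn, he⟩
    simp only [hn, he]
    refine ⟨fun _ => by simp, fun k => Or.inl ⟨fun _ => Even k, ⟨?_, ?_⟩, ?_, ?_⟩⟩ <;>
      rintro ⟨i, hi⟩ <;> revert hi <;> simp only [Nat.zero_add, Nat.add_comm 1 k, Nat.even_add_one] <;> tauto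

end TTS
end

section
/- Quantification over fair tefs via φ_fair: let o ∈ AP and φ_fair := A¹ G((o ∧ F¬o) ∨ (¬o ∧ Fo)). Let T = (t_i)_{i∈ι} be a team such that o ∈ t_i(n) iff n is even, for all i ∈ ι and n ∈ ℕ, let τ be a tef for ι, and let φ be any formula of TeamLTL extended with ⩔, NE, A¹ and the tef quantifiers ∃, ∀. Then (T,τ) ⊨ ∃(φ_fair ∧ φ) if and only if there exists a fair tef τ' for ι with τ'(0) = τ(0) and (T,τ') ⊨ φ. -/
namespace TTS

def Fair {ι : Type} (τ : ℕ → ι → ℕ) : Prop :=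
  ∀ (m : ℕ) (i : ι), ∃ n, m ≤ τ n i

/-- TeamLTL formulas extended with ⩔, NE, A¹ and the tef quantifiers ∃, ∀. -/
inductive QFormula (AP : Type) : Type
  | atom : AP → QFormula AP
  | natom : AP → QFormula AP
  | and : QFormula AP → QFormula AP → QFormula AP
  | or : QFormula AP → QFormula AP → QFormula AP
  | bor : QFormula AP → QFormula AP → QFormula AP
  | NE : QFormula AP
  | A1 : QFormula AP → QFormula AP
  | X : QFormula AP → QFormula AP
  | U : QFormula AP → QFormula AP → QFormula AP
  | W : QFormula AP → QFormula AP → QFormula AP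
  | Ex : QFormula AP → QFormula AP
  | All : QFormula AP → QFormula AP

def qsat {AP : Type} : {ι : Type} → (ι → Trace AP) → (ℕ → ι → ℕ) → QFormula AP → Prop
  | _, T, τ, .atom p => ∀ i, p ∈ T i (τ 0 i)
  | _, T, τ, .natom p => ∀ i, p ∉ T i (τ 0 i)
  | _, T, τ, .and φ ψ => qsat T τ φ ∧ qsat T τ ψ
  | ι, T, τ, .or φ ψ =>
      ∃ P : ι → Prop,
        qsat (fun i : {i // P i} => T i.1) (fun n i => τ n i.1) φ ∧
        qsat (fun i : {i // ¬ P i} => T i.1) (fun n i => τ n i.1) ψ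
  | _, T, τ, .bor φ ψ => qsat T τ φ ∨ qsat T τ ψ
  | ι, _, _, .NE => Nonempty ι
  | ι, T, τ, .A1 φ =>
      ∀ i : ι, qsat (fun j : {j // j = i} => T j.1) (fun n j => τ n j.1) φ
  | _, T, τ, .X φ => qsat T (shift τ 1) φ
  | _, T, τ, .U φ ψ =>
      ∃ k, qsat T (shift τ k) ψ ∧ ∀ m, m < k → qsat T (shift τ m) φ
  | _, T, τ, .W φ ψ =>
      ∀ k, qsat T (shift τ k) φ ∨ ∃ m, m ≤ k ∧ qsat T (shift τ m) ψ
  | _, T, τ, .Ex φ =>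
      ∃ τ', IsTef τ' ∧ (∀ i, τ' 0 i = τ 0 i) ∧ qsat T τ' φ
  | _, T, τ, .All φ =>
      ∀ τ', IsTef τ' → (∀ i, τ' 0 i = τ 0 i) → qsat T τ' φ
/-- ⊤ U φ and φ W ⊥ abbreviations, with ⊤ := o ∨ ¬o and ⊥ := o ∧ ¬o. -/
def F' {AP : Type} (o : AP) (φ : QFormula AP) : QFormula AP :=
  .U (.or (.atom o) (.natom o)) φ

def G' {AP : Type} (o : AP) (φ : QFormula AP) : QFormula AP :=
  .W φ (.and (.atom o) (.natom o))

/-- φ_fair := A¹ G((o ∧ F¬o) ∨ (¬o ∧ Fo)). -/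
def phiFair {AP : Type} (o : AP) : QFormula AP :=
  .A1 (G' o (.or (.and (.atom o) (F' o (.natom o)))
                 (.and (.natom o) (F' o (.atom o)))))

theorem phiFair_iff {AP ι : Type} (o : AP) (T : ι → Trace AP)
    (halt : ∀ (i : ι) (n : ℕ), o ∈ T i n ↔ Even n) (τ : ℕ → ι → ℕ) :
    qsat T τ (phiFair o) ↔
      ∀ i k, ∃ n, ¬ (Even (τ (n + k) i) ↔ Even (τ k i)) := by
  constructor
  · intro h i k
    have h1 := h i
    simp only [G', qsat] at h1
    rcases h1 k with h2 | ⟨m, -, h2, h3⟩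
    · obtain ⟨P, ⟨ha, hb⟩, ⟨hc, hd⟩⟩ := h2
      by_cases hP : P ⟨i, rfl⟩
      · have ha' := ha ⟨⟨i, rfl⟩, hP⟩
        simp only [F', qsat] at hb
        obtain ⟨n, hn, -⟩ := hb
        have hn' := hn ⟨⟨i, rfl⟩, hP⟩
        simp only [shift, halt, Nat.zero_add] at ha' hn'
        exact ⟨n, by tauto⟩
      · have ha' := hc ⟨⟨i, rfl⟩, hP⟩
        simp only [F', qsat] at hd
        obtain ⟨n, hn, -⟩ := hd
        have hn' := hn ⟨⟨i, rfl⟩, hP⟩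
        simp only [shift, halt, Nat.zero_add] at ha' hn'
        exact ⟨n, by tauto⟩
    · exact absurd (h2 ⟨i, rfl⟩) (h3 ⟨i, rfl⟩)
  · intro h i
    simp only [G', qsat]
    intro k
    left
    obtain ⟨n, hn⟩ := h i k
    by_cases he : Even (τ k i)
    · refine ⟨fun _ => True, ⟨?_, ?_⟩, ?_, ?_⟩
      · rintro ⟨⟨j, rfl⟩, -⟩
        simpa only [shift, halt, Nat.zero_add] using he
      · simp only [F', qsat]
        refine ⟨n, ?_, fun m _ => ⟨fun j => o ∈ T j.1.1 (τ (0 + m + k) j.1.1), fun j => j.2,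
          fun j => j.2⟩⟩
        rintro ⟨⟨j, rfl⟩, -⟩
        simp only [shift, halt, Nat.zero_add]
        tauto
      · exact fun j => absurd trivial j.2
      · simp only [F', qsat]
        exact ⟨0, fun j => absurd trivial j.2, fun m hm => absurd hm (Nat.not_lt_zero _)⟩
    · refine ⟨fun _ => False, ⟨?_, ?_⟩, ?_, ?_⟩
      · exact fun j => j.2.elim
      · simp only [F', qsat]
        exact ⟨0, fun j => j.2.elim, fun m hm => absurd hm (Nat.not_lt_zero _)⟩
      · rintro ⟨⟨j, rfl⟩, -⟩
        simpa only [shift, halt, Nat.zero_add] using he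
      · simp only [F', qsat]
        refine ⟨n, ?_, fun m _ => ⟨fun j => o ∈ T j.1.1 (τ (0 + m + k) j.1.1), fun j => j.2,
          fun j => j.2⟩⟩
        rintro ⟨⟨j, rfl⟩, -⟩
        simp only [shift, halt, Nat.zero_add]
        tauto

theorem fair_iff {ι : Type} (τ : ℕ → ι → ℕ) (hτ : IsTef τ) :
    (∀ i k, ∃ n, ¬ (Even (τ (n + k) i) ↔ Even (τ k i))) ↔ Fair τ := by
  obtain ⟨hm, -, hs⟩ := hτ
  have mono : ∀ i k n, τ k i ≤ τ (n + k) i := by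
    intro i k n
    induction n with
    | zero => simp
    | succ n ih =>
      have := hm (n + k) i
      rw [show n + 1 + k = n + k + 1 by omega]
      omega
  constructor
  · intro h m i
    induction m with
    | zero => exact ⟨0, Nat.zero_le _⟩
    | succ m ih =>
      obtain ⟨k, hk⟩ := ih
      obtain ⟨n, hn⟩ := h i k
      have h1 := mono i k n
      have h2 : τ (n + k) i ≠ τ k i := fun e => hn (by rw [e])
      exact ⟨n + k, by omega⟩
  · intro h i k
    by_contra hc
    push Not at hc
    have key : ∀ n, τ (n + k) i = τ k i := by
      intro n
      induction n with
      | zero => simp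
      | succ n ih =>
        have h1 := hm (n + k) i
        have h2 := hs (n + k) i
        have h3 := hc (n + 1)
        rw [show n + 1 + k = n + k + 1 by omega] at h3 ⊢
        rw [Nat.even_iff, Nat.even_iff] at h3
        omega
    obtain ⟨n, hn⟩ := h (τ k i + 1) i
    have h1 := mono i n k
    have h2 := key n
    rw [Nat.add_comm] at h1
    omega

/-- Quantification over fair tefs via φ_fair: on teams alternating on o,
∃(φ_fair ∧ φ) holds iff some fair tef with the same initial values satisfies φ. -/
theorem quantify_fair_tefs (AP ι : Type) (o : AP) (T : ι → Trace AP)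
    (halt : ∀ (i : ι) (n : ℕ), o ∈ T i n ↔ Even n)
    (τ : ℕ → ι → ℕ) (hτ : IsTef τ) (φ : QFormula AP) :
    qsat T τ (.Ex (.and (phiFair o) φ)) ↔
      ∃ τ' : ℕ → ι → ℕ, IsTef τ' ∧ Fair τ' ∧ (∀ i, τ' 0 i = τ 0 i) ∧
        qsat T τ' φ := by
  constructor
  · rintro ⟨τ', h1, h2, h3, h4⟩
    exact ⟨τ', h1, (fair_iff τ' h1).1 ((phiFair_iff o T halt τ').1 h3), h2, h4⟩
  · rintro ⟨τ', h1, h2, h3, h4⟩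
    exact ⟨τ', h1, h3, (phiFair_iff o T halt τ').2 ((fair_iff τ' h1).2 h2), h4⟩

end TTS
end
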